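/- Suppose 1 ≤ S < N and let x₀ ∈ X_S with ‖x₀‖₀ = S. Then the MSE of the estimator x̂_c at x₀ equals the closed-form constrained Barankin bound: ε(x₀; x̂_c) = ∫ ‖x̂_c(y) − x₀‖₂² dP_{x₀}(y) = S σ² + (N − S) σ² · (1 − ∏_{l ∈ supp(x₀)} g(x₀_l; σ²)). -/

import Mathlib

open MeasureTheory ProbabilityTheory Filter
open scoped ENNReal Classical

/-- The product Gaussian measure `P_x` on `ℝ^N` with mean `x` and variance `σ²` per coordinate. -/
noncomputable def gaussP (N : ℕ) (σ : ℝ) (x : Fin N → ℝ) : Measure (Fin N → ℝ) :=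
  MeasureTheory.Measure.pi fun i => gaussianReal (x i) (Real.toNNReal (σ ^ 2))

/-- The support of `x`: indices with nonzero entries. Its cardinality is `‖x‖₀`. -/
noncomputable def supp {N : ℕ} (x : Fin N → ℝ) : Finset (Fin N) :=
  Finset.univ.filter fun i => x i ≠ 0

/-- The sparse parameter set `X_S = {x : ‖x‖₀ ≤ S}`. -/
def sparseSet (N S : ℕ) : Set (Fin N → ℝ) := {x | (supp x).card ≤ S}

/-- An estimator is unbiased if each component is `P_x`-integrable with mean `x i`
for every `x ∈ X_S`. -/
def Unbiased (N S : ℕ) (σ : ℝ) (est : (Fin N → ℝ) → Fin N → ℝ) : Prop :=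
  ∀ x ∈ sparseSet N S, ∀ i,
    Integrable (fun y => est y i) (gaussP N σ x) ∧
    (∫ y, est y i ∂gaussP N σ x) = x i

/-- The MSE `ε(x; x̂) = ∫ ‖x̂(y) − x‖₂² dP_x(y)`, as an extended real. -/
noncomputable def MSE (N : ℕ) (σ : ℝ) (est : (Fin N → ℝ) → Fin N → ℝ)
    (x : Fin N → ℝ) : ℝ≥0∞ :=
  ∫⁻ y, ENNReal.ofReal (∑ i, (est y i - x i) ^ 2) ∂gaussP N σ x

/-- The constrained estimator `x̂_c`: identity on `supp(x₀)`, and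
`y_k (1 − ∏_{l ∈ supp(x₀)} tanh(y_l x₀_l/σ²))` off the support. -/
noncomputable def estC (N : ℕ) (σ : ℝ) (x₀ : Fin N → ℝ) (y : Fin N → ℝ) (k : Fin N) : ℝ :=
  if k ∈ supp x₀ then y k
  else y k * (1 - ∏ l ∈ supp x₀, Real.tanh (y l * x₀ l / σ ^ 2))


/-- `g(x; σ²) = (2/√(2πσ²)) ∫₀^∞ exp(−(y²+x²)/(2σ²)) sinh(yx/σ²) tanh(yx/σ²) dy`. -/
noncomputable def g (σ x : ℝ) : ℝ :=
  (2 / Real.sqrt (2 * Real.pi * σ ^ 2)) *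
    ∫ y in Set.Ioi (0 : ℝ),
      Real.exp (-(y ^ 2 + x ^ 2) / (2 * σ ^ 2)) * Real.sinh (y * x / σ ^ 2) *
        Real.tanh (y * x / σ ^ 2)

theorem aux_tanh_cont : Continuous Real.tanh := by
  have : Real.tanh = fun x => Real.sinh x / Real.cosh x := by
    funext x; exact Real.tanh_eq_sinh_div_cosh x
  rw [this]
  exact Real.continuous_sinh.div Real.continuous_cosh fun x => (Real.cosh_pos x).ne'

theorem aux_g (σ : ℝ) (hσ : 0 < σ) (x : ℝ) (φ : ℝ → ℝ) (hc : Continuous φ)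
    (hb : ∀ u, |φ u| ≤ 1)
    (h : ∀ u, Real.exp u * φ u + Real.exp (-u) * φ (-u) = 2 * (Real.sinh u * Real.tanh u)) :
    Integrable (fun y => φ (y * x / σ ^ 2)) (gaussianReal x (Real.toNNReal (σ ^ 2))) ∧
    ∫ y, φ (y * x / σ ^ 2) ∂(gaussianReal x (Real.toNNReal (σ ^ 2))) = g σ x := by
  have hs : 0 < σ ^ 2 := by positivity
  have hv : Real.toNNReal (σ ^ 2) ≠ 0 := by
    simpa using hσ.ne'
  have hm : Continuous (fun y => φ (y * x / σ ^ 2)) := hc.comp (by fun_prop)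
  refine ⟨Integrable.of_bound hm.aestronglyMeasurable 1 (ae_of_all _ fun y => hb _), ?_⟩
  rw [integral_gaussianReal_eq_integral_smul hv]
  set F : ℝ → ℝ := fun y => gaussianPDFReal x (Real.toNNReal (σ ^ 2)) y • φ (y * x / σ ^ 2) with hF
  have hFi : Integrable F :=
    (integrable_gaussianPDFReal x _).mul_bdd (c := 1) hm.aestronglyMeasurable
      (ae_of_all _ fun y => hb _)
  have hFn : Integrable (fun y => F (-y)) := hFi.comp_neg
  rw [← intervalIntegral.integral_Iic_add_Ioi (b := 0) hFi.integrableOn hFi.integrableOn]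
  have h0 := integral_comp_neg_Ioi 0 F
  rw [neg_zero] at h0
  rw [← h0, ← integral_add hFn.integrableOn hFi.integrableOn, g, ← integral_const_mul]
  congr 1
  funext y
  have hE : ∀ z : ℝ, F z = (Real.sqrt (2 * Real.pi * σ ^ 2))⁻¹ *
      (Real.exp (-(z ^ 2 + x ^ 2) / (2 * σ ^ 2)) * Real.exp (z * x / σ ^ 2)) *
        φ (z * x / σ ^ 2) := by
    intro z
    simp only [hF, gaussianPDFReal, smul_eq_mul, Real.coe_toNNReal _ hs.le]
    rw [← Real.exp_add]
    congr 3
    field_simp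
    ring
  rw [hE, hE]
  have h1 := h (y * x / σ ^ 2)
  have e1 : -y * x / σ ^ 2 = -(y * x / σ ^ 2) := by ring
  rw [e1, neg_sq]
  linear_combination (Real.sqrt (2 * Real.pi * σ ^ 2))⁻¹ *
      Real.exp (-(y ^ 2 + x ^ 2) / (2 * σ ^ 2)) * h1

theorem aux_g1 (σ : ℝ) (hσ : 0 < σ) (x : ℝ) :
    Integrable (fun y => Real.tanh (y * x / σ ^ 2)) (gaussianReal x (Real.toNNReal (σ ^ 2))) ∧
    ∫ y, Real.tanh (y * x / σ ^ 2) ∂(gaussianReal x (Real.toNNReal (σ ^ 2))) = g σ x := by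
  refine aux_g σ hσ x Real.tanh aux_tanh_cont (fun u => (Real.abs_tanh_lt_one u).le) fun u => ?_
  rw [Real.tanh_neg, Real.sinh_eq]
  ring

theorem aux_g2 (σ : ℝ) (hσ : 0 < σ) (x : ℝ) :
    Integrable (fun y => Real.tanh (y * x / σ ^ 2) ^ 2)
      (gaussianReal x (Real.toNNReal (σ ^ 2))) ∧
    ∫ y, Real.tanh (y * x / σ ^ 2) ^ 2 ∂(gaussianReal x (Real.toNNReal (σ ^ 2))) = g σ x := by
  refine aux_g σ hσ x (fun u => Real.tanh u ^ 2) (aux_tanh_cont.pow 2) (fun u => ?_) fun u => ?_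
  · rw [abs_of_nonneg (sq_nonneg _)]
    exact (Real.tanh_sq_lt_one u).le
  · have h1 : Real.sinh u = Real.tanh u * Real.cosh u := by
      rw [Real.tanh_eq_sinh_div_cosh]
      field_simp [(Real.cosh_pos u).ne']
    rw [h1, Real.tanh_neg, Real.cosh_eq]
    ring

theorem aux_var (σ : ℝ) (x : ℝ) :
    Integrable (fun y => (y - x) ^ 2) (gaussianReal x (Real.toNNReal (σ ^ 2))) ∧
    ∫ y, (y - x) ^ 2 ∂(gaussianReal x (Real.toNNReal (σ ^ 2))) = σ ^ 2 := by
  have hL : MemLp (fun y : ℝ => y) 2 (gaussianReal x (Real.toNNReal (σ ^ 2))) :=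
    memLp_id_gaussianReal' 2 (by simp)
  refine ⟨(hL.sub (memLp_const x)).integrable_sq, ?_⟩
  have h := variance_fun_id_gaussianReal (μ := x) (v := Real.toNNReal (σ ^ 2))
  rw [variance_eq_integral (by fun_prop), integral_id_gaussianReal,
    Real.coe_toNNReal _ (sq_nonneg σ)] at h
  exact h

theorem aux_prod (N : ℕ) (σ : ℝ) (x : Fin N → ℝ) (k : Fin N) (s : Finset (Fin N)) (hk : k ∉ s)
    (a : ℝ → ℝ) (A : ℝ) (h : Fin N → ℝ → ℝ) (c : Fin N → ℝ)
    (ha : Integrable a (gaussianReal (x k) (Real.toNNReal (σ ^ 2))) ∧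
      ∫ y, a y ∂(gaussianReal (x k) (Real.toNNReal (σ ^ 2))) = A)
    (hh : ∀ l, Integrable (h l) (gaussianReal (x l) (Real.toNNReal (σ ^ 2))) ∧
      ∫ y, h l y ∂(gaussianReal (x l) (Real.toNNReal (σ ^ 2))) = c l) :
    Integrable (fun y => a (y k) * ∏ l ∈ s, h l (y l)) (gaussP N σ x) ∧
    ∫ y, a (y k) * ∏ l ∈ s, h l (y l) ∂(gaussP N σ x) = A * ∏ l ∈ s, c l := by
  let f : Fin N → ℝ → ℝ := fun i => if i = k then a else if i ∈ s then h i else fun _ => 1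
  have hsplit : ∀ (u v : Fin N → ℝ), 
      u k * ∏ l ∈ s, v l = ∏ i, (if i = k then u i else if i ∈ s then v i else 1) := by
    intro u v
    rw [← Finset.mul_prod_erase Finset.univ _ (Finset.mem_univ k), if_pos rfl]
    congr 1
    rw [← Finset.prod_subset (s₁ := s) (s₂ := Finset.univ.erase k)]
    · refine Finset.prod_congr rfl fun i hi => ?_
      have : i ≠ k := fun e => hk (e ▸ hi)
      simp [this, hi]
    · intro i hi
      have : i ≠ k := fun e => hk (e ▸ hi)
      simp [this]
    · intro i hi hi'
      have : i ≠ k := (Finset.mem_erase.1 hi).1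
      simp [this, hi']
  have e : (fun y : Fin N → ℝ => a (y k) * ∏ l ∈ s, h l (y l)) = fun y => ∏ i, f i (y i) := by
    funext y
    rw [hsplit (fun i => a (y i)) (fun i => h i (y i))]
    refine Finset.prod_congr rfl fun i _ => ?_
    simp only [f]
    split_ifs <;> rfl
  rw [e]
  unfold gaussP
  constructor
  · refine Integrable.fintype_prod fun i => ?_
    simp only [f]
    split_ifs with h1 h2
    · subst h1; exact ha.1
    · exact (hh i).1
    · exact integrable_const _
  · rw [integral_fintype_prod_eq_prod, hsplit (fun _ => A) c]
    refine Finset.prod_congr rfl fun i _ => ?_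
    simp only [f]
    split_ifs with h1 h2
    · subst h1; exact ha.2
    · exact (hh i).2
    · simp

theorem aux_on (N : ℕ) (σ : ℝ) (x₀ : Fin N → ℝ) (k : Fin N) (hk : k ∈ supp x₀) :
    Integrable (fun y => (estC N σ x₀ y k - x₀ k) ^ 2) (gaussP N σ x₀) ∧
    ∫ y, (estC N σ x₀ y k - x₀ k) ^ 2 ∂(gaussP N σ x₀) = σ ^ 2 := by
  have := aux_prod N σ x₀ k ∅ (by simp) (fun y => (y - x₀ k) ^ 2) (σ ^ 2) (fun _ _ => 1)
    (fun _ => 1) (aux_var σ _) (fun l => ⟨integrable_const _, by simp⟩)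
  simpa [estC, hk] using this

theorem aux_off (N : ℕ) (σ : ℝ) (hσ : 0 < σ) (x₀ : Fin N → ℝ) (k : Fin N) (hk : k ∉ supp x₀) :
    Integrable (fun y => (estC N σ x₀ y k - x₀ k) ^ 2) (gaussP N σ x₀) ∧
    ∫ y, (estC N σ x₀ y k - x₀ k) ^ 2 ∂(gaussP N σ x₀) =
      σ ^ 2 * (1 - ∏ l ∈ supp x₀, g σ (x₀ l)) := by
  have hx : x₀ k = 0 := by simpa [supp] using hk
  have h0 := aux_prod N σ x₀ k (supp x₀) hk (fun y => (y - x₀ k) ^ 2) (σ ^ 2) (fun _ _ => 1)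
    (fun _ => 1) (aux_var σ _) (fun l => ⟨integrable_const _, by simp⟩)
  have h1 := aux_prod N σ x₀ k (supp x₀) hk (fun y => (y - x₀ k) ^ 2) (σ ^ 2) _
    _ (aux_var σ _) (fun l => aux_g1 σ hσ (x₀ l))
  have h2 := aux_prod N σ x₀ k (supp x₀) hk (fun y => (y - x₀ k) ^ 2) (σ ^ 2) _
    _ (aux_var σ _) (fun l => aux_g2 σ hσ (x₀ l))
  have e : (fun y => (estC N σ x₀ y k - x₀ k) ^ 2) = fun y : Fin N → ℝ =>
      (y k - x₀ k) ^ 2 * ∏ l ∈ supp x₀, (1 : ℝ)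
      - 2 * ((y k - x₀ k) ^ 2 * ∏ l ∈ supp x₀, Real.tanh (y l * x₀ l / σ ^ 2))
      + (y k - x₀ k) ^ 2 * ∏ l ∈ supp x₀, Real.tanh (y l * x₀ l / σ ^ 2) ^ 2 := by
    funext y
    rw [Finset.prod_pow, Finset.prod_const_one]
    simp only [estC, hk, if_false, hx]
    ring
  rw [e]
  refine ⟨(h0.1.sub (h1.1.const_mul 2)).add h2.1, ?_⟩
  have h01 : Integrable (fun y : Fin N → ℝ => (y k - x₀ k) ^ 2 * ∏ l ∈ supp x₀, (1 : ℝ)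
      - 2 * ((y k - x₀ k) ^ 2 * ∏ l ∈ supp x₀, Real.tanh (y l * x₀ l / σ ^ 2)))
      (gaussP N σ x₀) := h0.1.sub (h1.1.const_mul 2)
  rw [integral_add h01 h2.1, integral_sub h0.1 (h1.1.const_mul 2),
    integral_const_mul, h0.2, h1.2, h2.2, Finset.prod_const_one]
  ring

/-- The MSE of `x̂_c` at `x₀` equals the closed-form constrained Barankin bound. -/
theorem stmt_7 (N S : ℕ) (σ : ℝ) (hσ : 0 < σ) (hS : 1 ≤ S) (hSN : S < N)
    (x₀ : Fin N → ℝ) (hcard : (supp x₀).card = S) :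
    MSE N σ (estC N σ x₀) x₀ = ENNReal.ofReal ((S : ℝ) * σ ^ 2 +
      ((N : ℝ) - S) * σ ^ 2 * (1 - ∏ l ∈ supp x₀, g σ (x₀ l))) := by
  have hI : ∀ k, Integrable (fun y => (estC N σ x₀ y k - x₀ k) ^ 2) (gaussP N σ x₀) := by
    intro k
    by_cases hk : k ∈ supp x₀
    · exact (aux_on N σ x₀ k hk).1
    · exact (aux_off N σ hσ x₀ k hk).1
  unfold MSE
  rw [← ofReal_integral_eq_lintegral_ofReal (integrable_finsetSum _ fun k _ => hI k)
    (ae_of_all _ fun y => Finset.sum_nonneg fun k _ => sq_nonneg _),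
    integral_finsetSum _ fun k _ => hI k]
  congr 1
  rw [← Finset.sum_add_sum_compl (supp x₀),
    Finset.sum_congr rfl fun k hk => (aux_on N σ x₀ k hk).2,
    Finset.sum_congr rfl fun k hk => (aux_off N σ hσ x₀ k (Finset.mem_compl.1 hk)).2,
    Finset.sum_const, Finset.sum_const, Finset.card_compl, hcard, Fintype.card_fin,
    nsmul_eq_mul, nsmul_eq_mul, Nat.cast_sub hSN.le]
  ring
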